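/- arXiv:2308.01110 — 5 statements merged into one kernel-verified Lean document; each statement's English description precedes it below -/
import Mathlib

section
/- Let A be an additive commutative group and B a commutative ring. If f : A → B is a polynomial map of degree ≤ n and g : A → B is a polynomial map of degree ≤ m, then the pointwise product f·g : A → B, (f·g)(x) = f(x)·g(x), is a polynomial map of degree ≤ n + m. -/
/-- The difference operator: `(D_a f)(x) = f (a + x) - f x`. -/
def DOp {A B : Type*} [AddCommGroup A] [AddCommGroup B] (a : A) (f : A → B) : A → B :=
  fun x => f (a + x) - f x

/-- `f : A → B` is a polynomial map of degree `≤ n`. -/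
def IsPolyDeg {A B : Type*} [AddCommGroup A] [AddCommGroup B] : ℕ → (A → B) → Prop
  | 0 => fun f => ∀ a x, DOp a f x = 0
  | n + 1 => fun f => ∀ a, IsPolyDeg n (DOp a f)

section

variable {A B C D : Type*} [AddCommGroup A] [AddCommGroup B] [AddCommGroup C] [AddCommGroup D]

theorem dOp_add (a : A) (f g : A → B) : DOp a (f + g) = DOp a f + DOp a g :=
  funext fun _ => add_sub_add_comm ..

theorem dOp_comp_add_left (a c : A) (f : A → B) :
    DOp a (fun x => f (c + x)) = fun x => DOp a f (c + x) := by
  funext x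
  simp only [DOp, add_left_comm]

theorem dOp_addMonoidHom_comp (a : A) (φ : B →+ C) (f : A → B) :
    DOp a (φ ∘ f) = φ ∘ DOp a f :=
  funext fun _ => (map_sub φ _ _).symm

theorem dOp_map₂ (a : A) (φ : B →+ C →+ D) (f : A → B) (g : A → C) :
    DOp a (fun x => φ (f x) (g x)) =
      (fun x => φ (DOp a f x) (g (a + x))) + fun x => φ (f x) (DOp a g x) := by
  funext x
  simp only [DOp, Pi.add_apply, map_sub, AddMonoidHom.sub_apply, sub_add_sub_cancel]

theorem isPolyDeg_zero_iff {f : A → B} : IsPolyDeg 0 f ↔ ∃ b, f = Function.const A b := by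
  constructor
  · intro hf
    exact ⟨f 0, funext fun x => by simpa [DOp, sub_eq_zero] using hf x 0⟩
  · rintro ⟨b, rfl⟩ _ _
    exact sub_self b

namespace IsPolyDeg

variable {n : ℕ} {f g : A → B}

theorem add (hf : IsPolyDeg n f) (hg : IsPolyDeg n g) : IsPolyDeg n (f + g) := by
  induction n generalizing f g with
  | zero =>
    intro a x
    rw [dOp_add, Pi.add_apply, hf a x, hg a x, add_zero]
  | succ n ih =>
    intro a
    rw [dOp_add]
    exact ih (hf a) (hg a)

theorem comp_add_left (hf : IsPolyDeg n f) (c : A) : IsPolyDeg n (fun x => f (c + x)) := by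
  induction n generalizing f with
  | zero =>
    intro a x
    rw [dOp_comp_add_left]
    exact hf a (c + x)
  | succ n ih =>
    intro a
    rw [dOp_comp_add_left]
    exact ih (hf a)

theorem addMonoidHom_comp (hf : IsPolyDeg n f) (φ : B →+ C) : IsPolyDeg n (φ ∘ f) := by
  induction n generalizing f with
  | zero =>
    intro a x
    rw [dOp_addMonoidHom_comp, Function.comp_apply, hf a x, map_zero]
  | succ n ih =>
    intro a
    rw [dOp_addMonoidHom_comp]
    exact ih (hf a)

end IsPolyDeg

-- Constant factors are kept out of the Leibniz rule `dOp_map₂`: their difference vanishes, but no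
-- `n : ℕ` records degree `-1`. Fixing one argument of `φ` leaves an additive map instead.
theorem isPolyDeg_mul_general {n m : ℕ} {f : A → B} {g : A → C} (φ : B →+ C →+ D)
    (hf : IsPolyDeg n f) (hg : IsPolyDeg m g) : IsPolyDeg (n + m) (fun x => φ (f x) (g x)) := by
  induction n generalizing f g m with
  | zero =>
    obtain ⟨b, rfl⟩ := isPolyDeg_zero_iff.1 hf
    rw [zero_add]
    exact hg.addMonoidHom_comp (φ b)
  | succ n ihn =>
    induction m generalizing g with
    | zero =>
      obtain ⟨c, rfl⟩ := isPolyDeg_zero_iff.1 hg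
      exact hf.addMonoidHom_comp (φ.flip c)
    | succ m ihm =>
      intro a
      have left_term : IsPolyDeg (n + 1 + m) (fun x => φ (DOp a f x) (g (a + x))) := by
        rw [add_right_comm]
        exact ihn (hf a) (hg.comp_add_left a)
      have right_term : IsPolyDeg (n + 1 + m) (fun x => φ (f x) (DOp a g x)) := ihm (hg a)
      rw [dOp_map₂]
      exact left_term.add right_term

end

/-- If `f : A → B` is a polynomial map of degree `≤ n` and `g : A → B` of degree `≤ m`, with
`B` a commutative ring, then the pointwise product `f·g` is a polynomial map of
degree `≤ n + m`. -/
theorem isPolyDeg_mul {A B : Type*} [AddCommGroup A] [CommRing B]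
    (n m : ℕ) (f g : A → B) (hf : IsPolyDeg n f) (hg : IsPolyDeg m g) :
    IsPolyDeg (n + m) (fun x => f x * g x) :=
  isPolyDeg_mul_general AddMonoidHom.mul hf hg
end

section
/- Let A, B, C be additive commutative groups. If f : A → B is a polynomial map of degree ≤ n and g : B → C is a polynomial map of degree ≤ m, then the composition g ∘ f : A → C is a polynomial map of degree ≤ n·m. -/
/-!
Every translate of `f` has degree at most `n`, and `g (f x)` is `φ = g ∘ ev₀` evaluated at the
translate of `f` by `x`, where `ev₀ h = h 0`. Filter the group of functions `A → B` by letting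
weight `i` stand for degree at most `n - i`, and call `φ` of weighted degree less than `N` if it is
killed by iterated differences in directions of positive weight whose weights add up to at least
`N`. Then `g ∘ ev₀` has weighted degree at most `n * m`, because a direction of weight above `n` is
zero. On the other hand, translation by `a` is `1 + D_a` and `D_a` raises weights by one, so
replacing `φ` by `φ ∘ (1 + D_a) - φ`, which is the effect of `D_a` on `x ↦ φ (f (x + ·))`, lowers
the weighted degree by one.
-/

section WeightedDegree

variable {A B C V W : Type*} [AddCommGroup A] [AddCommGroup B] [AddCommGroup C]
  [AddCommGroup V] [AddCommGroup W]

/-- The difference operator `D_a`, bundled as an endomorphism of the additive group of functions. -/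
def diffHom (a : A) : (A → B) →+ (A → B) where
  toFun := DOp a
  map_zero' := funext fun _ => sub_self 0
  map_add' _ _ := funext fun _ => add_sub_add_comm _ _ _ _

lemma dOp_zero_left (f : A → B) : DOp 0 f = 0 := by
  funext x
  simp [DOp]

lemma translate_eq_add_dOp (a : A) (f : A → B) : (fun x => f (a + x)) = f + DOp a f :=
  funext fun x => (add_sub_cancel (f x) (f (a + x))).symm

section PolyDegLT

/-- The group of polynomial maps `A → B` of degree `< k`. The strict bound makes room for the zero
map as the only map of degree `< 0`. -/
def polyDegLT (A B : Type*) [AddCommGroup A] [AddCommGroup B] : ℕ → AddSubgroup (A → B)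
  | 0 => ⊥
  | k + 1 => ⨅ a, (polyDegLT A B k).comap (diffHom a)

lemma mem_polyDegLT_zero {f : A → B} : f ∈ polyDegLT A B 0 ↔ f = 0 :=
  AddSubgroup.mem_bot

lemma mem_polyDegLT_succ {k : ℕ} {f : A → B} :
    f ∈ polyDegLT A B (k + 1) ↔ ∀ a, DOp a f ∈ polyDegLT A B k :=
  AddSubgroup.mem_iInf

lemma isPolyDeg_iff_mem_polyDegLT {n : ℕ} {f : A → B} :
    IsPolyDeg n f ↔ f ∈ polyDegLT A B (n + 1) := by
  induction n generalizing f with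
  | zero => simp only [IsPolyDeg, mem_polyDegLT_succ, mem_polyDegLT_zero, funext_iff, Pi.zero_apply]
  | succ n ih => exact (forall_congr' fun _ => ih).trans mem_polyDegLT_succ.symm

lemma polyDegLT_mono : Monotone (polyDegLT A B) := by
  refine monotone_nat_of_le_succ fun k => ?_
  induction k with
  | zero => exact bot_le
  | succ k ih => exact fun f hf => mem_polyDegLT_succ.2 fun a => ih (mem_polyDegLT_succ.1 hf a)

lemma dOp_mem_polyDegLT {k : ℕ} {f : A → B} (hf : f ∈ polyDegLT A B k) (a : A) :
    DOp a f ∈ polyDegLT A B (k - 1) := by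
  cases k with
  | zero =>
    rw [mem_polyDegLT_zero.1 hf]
    exact mem_polyDegLT_zero.2 (map_zero (diffHom a))
  | succ k => exact mem_polyDegLT_succ.1 hf a

lemma translate_mem_polyDegLT {k : ℕ} {f : A → B} (hf : f ∈ polyDegLT A B k) (a : A) :
    (fun y => f (a + y)) ∈ polyDegLT A B k := by
  rw [translate_eq_add_dOp]
  exact add_mem hf (polyDegLT_mono (Nat.sub_le k 1) (dOp_mem_polyDegLT hf a))

end PolyDegLT

section WeightedDegLT

/-- The group of maps `φ : V → C` of weighted degree `< N` on a group `V` filtered by `P`: taking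
differences in a direction of `P i`, for any `i ≥ 1`, lowers the degree by `i`, and a map of degree
`< 0` vanishes on `P 0`. The index `i` is written `j + 1`, and the truncation in `N - j` reflects
that all negative degrees are identified. -/
def weightedDegLT (P : ℕ → AddSubgroup V) (C : Type*) [AddCommGroup C] : ℕ → AddSubgroup (V → C)
  | 0 => ⨅ v ∈ P 0, (Pi.evalAddMonoidHom (fun _ => C) v).ker
  | N + 1 => ⨅ j, ⨅ h ∈ P (j + 1), (weightedDegLT P C (N - j)).comap (diffHom h)

variable {P : ℕ → AddSubgroup V} {Q : ℕ → AddSubgroup W} {N : ℕ}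

lemma mem_weightedDegLT_zero {φ : V → C} :
    φ ∈ weightedDegLT P C 0 ↔ ∀ v ∈ P 0, φ v = 0 := by
  rw [weightedDegLT]
  simp only [AddSubgroup.mem_iInf, AddMonoidHom.mem_ker, Pi.evalAddMonoidHom_apply]

lemma mem_weightedDegLT_succ {φ : V → C} :
    φ ∈ weightedDegLT P C (N + 1) ↔ ∀ j, ∀ h ∈ P (j + 1), DOp h φ ∈ weightedDegLT P C (N - j) := by
  rw [weightedDegLT]
  simp only [AddSubgroup.mem_iInf]
  rfl

lemma comp_affine_mem_weightedDegLT {φ : W → C} (hφ : φ ∈ weightedDegLT Q C N) (T : V →+ W)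
    (hT : ∀ i, P i ≤ (Q i).comap T) {w : W} (hw : w ∈ Q 0) :
    (fun v => φ (w + T v)) ∈ weightedDegLT P C N := by
  induction N using Nat.strong_induction_on generalizing φ with
  | h N ih =>
  cases N with
  | zero =>
    rw [mem_weightedDegLT_zero] at hφ ⊢
    exact fun v hv => hφ _ (add_mem hw (hT 0 hv))
  | succ N =>
    rw [mem_weightedDegLT_succ] at hφ ⊢
    intro j h hh
    have diff_comp : DOp h (fun v => φ (w + T v)) = fun v => DOp (T h) φ (w + T v) := by
      funext v
      simp only [DOp, map_add, add_left_comm]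
    rw [diff_comp]
    exact ih (N - j) (by omega) (hφ j _ (hT _ hh))

lemma comp_addHom_mem_weightedDegLT {n k : ℕ} {g : B → C} (hg : g ∈ polyDegLT B C k)
    (hP : Antitone P) (L : V →+ B) (hL : P (n + 1) ≤ L.ker) (hN : n * k < N + n) :
    g ∘ L ∈ weightedDegLT P C N := by
  induction k generalizing g N with
  | zero =>
    rw [mem_polyDegLT_zero.1 hg]
    exact zero_mem _
  | succ k ih =>
    rw [mul_add_one, Nat.add_lt_add_iff_right] at hN
    obtain ⟨N, rfl⟩ : ∃ M, N = M + 1 := Nat.exists_eq_add_one.2 (Nat.zero_lt_of_lt hN)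
    refine mem_weightedDegLT_succ.2 fun j h hh => ?_
    have diff_comp : DOp h (g ∘ L) = DOp (L h) g ∘ L := by
      funext v
      simp only [DOp, Function.comp_apply, map_add]
    rw [diff_comp]
    rcases lt_or_ge j n with hj | hj
    · exact ih (mem_polyDegLT_succ.1 hg (L h)) (by omega)
    · have hLh : L h = 0 := hL (hP (Nat.succ_le_succ hj) hh)
      rw [hLh, dOp_zero_left]
      exact zero_mem _

lemma comp_id_add_sub_mem_weightedDegLT {φ : V → C} (hφ : φ ∈ weightedDegLT P C N)
    (hP : Antitone P) (S : V →+ V) (hS : ∀ i, P i ≤ (P (i + 1)).comap S) :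
    (fun v => φ (v + S v) - φ v) ∈ weightedDegLT P C (N - 1) := by
  have id_add_mem (i : ℕ) : P i ≤ (P i).comap (AddMonoidHom.id V + S) :=
    fun v hv => add_mem hv (hP i.le_succ (hS i hv))
  induction N using Nat.strong_induction_on generalizing φ with
  | h N ih =>
  match N with
  | 0 =>
    rw [mem_weightedDegLT_zero] at hφ ⊢
    intro v hv
    rw [hφ v hv, hφ (v + S v) (id_add_mem 0 hv), sub_zero]
  | 1 =>
    refine mem_weightedDegLT_zero.2 fun v hv => ?_
    rw [add_comm v]
    exact mem_weightedDegLT_zero.1 (mem_weightedDegLT_succ.1 hφ 0 (S v) (hS 0 hv)) v hv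
  | N + 2 =>
    refine mem_weightedDegLT_succ.2 fun j h hh => ?_
    have diff_eq : DOp h (fun v => φ (v + S v) - φ v) =
        (fun v => DOp h φ (v + S v) - DOp h φ v) + fun v => DOp (S h) φ (h + (v + S v)) := by
      funext v
      have shift_eq : h + v + S (h + v) = S h + (h + (v + S v)) := by
        rw [map_add]
        abel
      simp only [DOp, Pi.add_apply, shift_eq]
      abel
    have diff_h_mem : (fun v => DOp h φ (v + S v) - DOp h φ v) ∈ weightedDegLT P C (N - j) := by
      have := ih (N + 1 - j) (by omega) (mem_weightedDegLT_succ.1 hφ j h hh)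
      rwa [Nat.sub_right_comm, Nat.add_sub_cancel] at this
    have diff_Sh_mem : DOp (S h) φ ∈ weightedDegLT P C (N - j) := by
      simpa only [Nat.add_sub_add_right] using mem_weightedDegLT_succ.1 hφ (j + 1) (S h) (hS _ hh)
    rw [diff_eq]
    exact add_mem diff_h_mem
      (comp_affine_mem_weightedDegLT diff_Sh_mem _ id_add_mem (hP (Nat.zero_le _) hh))

end WeightedDegLT

section Translates

/-- The filtration of the maps of degree `< k` in which weight `i` means degree `< k - i`. By
truncated subtraction, only the zero map has weight `≥ k`. -/
def polyFiltration (A B : Type*) [AddCommGroup A] [AddCommGroup B] (k i : ℕ) :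
    AddSubgroup (A → B) :=
  polyDegLT A B (k - i)

lemma polyFiltration_antitone (k : ℕ) : Antitone (polyFiltration A B k) :=
  fun _ _ hij => polyDegLT_mono (Nat.sub_le_sub_left hij k)

lemma polyFiltration_le_comap_diffHom (k i : ℕ) (a : A) :
    polyFiltration A B k i ≤ (polyFiltration A B k (i + 1)).comap (diffHom a) :=
  fun _ hf => dOp_mem_polyDegLT hf a

lemma comp_translate_mem_polyDegLT {k N : ℕ} {φ : (A → B) → C}
    (hφ : φ ∈ weightedDegLT (polyFiltration A B k) C N) {f : A → B} (hf : f ∈ polyDegLT A B k) :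
    (fun x => φ fun y => f (x + y)) ∈ polyDegLT A C N := by
  induction N generalizing φ with
  | zero =>
    exact mem_polyDegLT_zero.2 <| funext fun x =>
      mem_weightedDegLT_zero.1 hφ _ (translate_mem_polyDegLT hf x)
  | succ N ih =>
    refine mem_polyDegLT_succ.2 fun a => ?_
    have diff_comp : DOp a (fun x => φ fun y => f (x + y)) =
        fun x => φ ((fun y => f (x + y)) + diffHom a fun y => f (x + y)) -
          φ fun y => f (x + y) := by
      funext x
      have translate_add : (fun y => f (a + x + y)) =
          (fun y => f (x + y)) + diffHom a fun y => f (x + y) := by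
        simp only [add_assoc, add_left_comm a x]
        exact translate_eq_add_dOp a fun y => f (x + y)
      simp only [DOp, translate_add]
    rw [diff_comp]
    exact ih (comp_id_add_sub_mem_weightedDegLT hφ (polyFiltration_antitone k) (diffHom a)
      fun i => polyFiltration_le_comap_diffHom k i a)

end Translates

end WeightedDegree

/-- If `f : A → B` is a polynomial map of degree `≤ n` and `g : B → C` of degree `≤ m`, then
`g ∘ f` is a polynomial map of degree `≤ n * m`. -/
theorem isPolyDeg_comp {A B C : Type*} [AddCommGroup A] [AddCommGroup B] [AddCommGroup C]
    (n m : ℕ) (f : A → B) (g : B → C) (hf : IsPolyDeg n f) (hg : IsPolyDeg m g) :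
    IsPolyDeg (n * m) (g ∘ f) := by
  rw [isPolyDeg_iff_mem_polyDegLT] at hf hg ⊢
  let evalZero : (A → B) →+ B := Pi.evalAddMonoidHom (fun _ => B) 0
  have evalZero_ker : polyFiltration A B (n + 1) (n + 1) ≤ evalZero.ker := by
    intro h hh
    rw [polyFiltration, Nat.sub_self, mem_polyDegLT_zero] at hh
    exact congrFun hh 0
  have weighted : g ∘ evalZero ∈ weightedDegLT (polyFiltration A B (n + 1)) C (n * m + 1) :=
    comp_addHom_mem_weightedDegLT hg (polyFiltration_antitone _) evalZero evalZero_ker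
      (by rw [mul_add_one]; omega)
  have comp_eq : g ∘ f = fun x => (g ∘ evalZero) fun y => f (x + y) :=
    funext fun x => congrArg (g ∘ f) (add_zero x).symm
  rw [comp_eq]
  exact comp_translate_mem_polyDegLT weighted hf
end

section
/- Let p be a prime and let n, s : ℕ with n ≥ 1. Then in the polynomial ring (ZMod (p^n))[X] one has the identity (X − 1)^{p^{n−1+s}} = (X^{p^s} − 1)^{p^{n−1}}. Equivalently, in ℤ[X] the difference (X − 1)^{p^{n−1+s}} − (X^{p^s} − 1)^{p^{n−1}} has all coefficients divisible by p^n. -/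
/-!
Modulo `p`, the Frobenius identity gives `(x - y) ^ p ^ s ≡ x ^ p ^ s - y ^ p ^ s` in every
commutative ring. Each `p`-th power turns a congruence modulo `p ^ i` with `i ≥ 1` into one modulo
`p ^ (i + 1)`, so the `p ^ k`-th powers of the two sides agree modulo `p ^ (k + 1)`.
-/

section CommRing

variable {R : Type*} [CommRing R] {p : ℕ}

theorem prime_dvd_sub_pow_prime_pow_sub (hp : p.Prime) (s : ℕ) (x y : R) :
    (p : R) ∣ (x - y) ^ p ^ s - (x ^ p ^ s - y ^ p ^ s) := by
  obtain ⟨r, hr⟩ := exists_add_pow_prime_pow_eq hp (x - y) y s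
  rw [sub_add_cancel] at hr
  exact ⟨-((x - y) * y * r), by linear_combination -hr⟩

theorem prime_pow_succ_dvd_sub_pow_prime_pow_sub (hp : p.Prime) (k s : ℕ) (x y : R) :
    (p : R) ^ (k + 1) ∣ (x - y) ^ p ^ (k + s) - (x ^ p ^ s - y ^ p ^ s) ^ p ^ k := by
  rw [add_comm k s, pow_add p s k, pow_mul]
  exact dvd_sub_pow_of_dvd_sub (prime_dvd_sub_pow_prime_pow_sub hp s x y) k

theorem pow_sub_one_pow_congr_general (hp : p.Prime) {k : ℕ} (hpk : (p : R) ^ (k + 1) = 0)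
    (s : ℕ) (x y : R) :
    (x - y) ^ p ^ (k + s) = (x ^ p ^ s - y ^ p ^ s) ^ p ^ k := by
  rw [← sub_eq_zero, ← zero_dvd_iff, ← hpk]
  exact prime_pow_succ_dvd_sub_pow_prime_pow_sub hp k s x y

end CommRing

/-- For a prime `p` and `n ≥ 1`, in `(ℤ/p^n)[X]` one has
`(X - 1)^(p^(n-1+s)) = (X^(p^s) - 1)^(p^(n-1))`. -/
theorem pow_sub_one_pow_congr (p : ℕ) (hp : p.Prime) (n s : ℕ) (hn : 1 ≤ n) :
    (Polynomial.X - 1 : Polynomial (ZMod (p ^ n))) ^ (p ^ (n - 1 + s)) =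
      (Polynomial.X ^ (p ^ s) - 1) ^ (p ^ (n - 1)) := by
  have hpn : (p : Polynomial (ZMod (p ^ n))) ^ (n - 1 + 1) = 0 := by
    rw [Nat.sub_add_cancel hn, ← Nat.cast_pow, CharP.cast_eq_zero]
  simpa only [one_pow] using pow_sub_one_pow_congr_general hp hpn s Polynomial.X 1
end

section
/- Let p be a prime and let n, s : ℕ with n ≥ 1. Then in the polynomial ring (ZMod (p^n))[X] the polynomial (X − 1)^{p^s} divides X^{p^{n+s−1}} − 1. Equivalently, in ℤ[X] the polynomial X^{p^{n+s−1}} − 1 lies in the ideal generated by (X − 1)^{p^s} and the constant p^n. -/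
/-!
Expanding `a ^ N = ((a - b) + b) ^ N` by the binomial theorem, `(a - b) ^ m` divides `a ^ N - b ^ N`
as soon as the coefficients `N.choose k` with `0 < k < m` vanish in the ring. For `N = p ^ e` the
`p`-adic valuation of `N.choose k` is `e - v_p(k)`, and `v_p(k) ≤ s - 1` when `0 < k < p ^ s`, so
`e = n + s - 1` makes all these coefficients divisible by `p ^ n`.
-/

theorem prime_pow_dvd_choose_prime_pow {p n e k : ℕ} (hp : p.Prime) (hk : k ≠ 0)
    (hke : n + k.factorization p ≤ e) : p ^ n ∣ (p ^ e).choose k := by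
  obtain hlt | hle := lt_or_ge (p ^ e) k
  · simp [Nat.choose_eq_zero_of_lt hlt]
  · rw [hp.pow_dvd_iff_le_factorization (Nat.choose_pos hle).ne',
      Nat.factorization_choose_prime_pow hp hle hk]
    exact Nat.le_sub_of_add_le hke

theorem sub_pow_dvd_pow_sub_pow_of_choose_eq_zero {R : Type*} [Ring R] {a b : R}
    (hab : Commute a b) {m N : ℕ} (hchoose : ∀ k ≠ 0, k < m → (N.choose k : R) = 0) :
    (a - b) ^ m ∣ a ^ N - b ^ N := by
  have expansion : a ^ N - b ^ N =
      ∑ k ∈ Finset.range N, (a - b) ^ (k + 1) * b ^ (N - (k + 1)) * N.choose (k + 1) := by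
    have hcomm : Commute (a - b) b := hab.sub_left (Commute.refl b)
    have h := hcomm.add_pow N
    rw [sub_add_cancel, Finset.sum_range_succ'] at h
    simp [h]
  rw [expansion]
  refine Finset.dvd_sum fun k _ ↦ ?_
  obtain hlt | hle := lt_or_ge (k + 1) m
  · simp [hchoose (k + 1) k.succ_ne_zero hlt]
  · exact ((pow_dvd_pow (a - b) hle).mul_right _).mul_right _

theorem sub_one_pow_dvd_general {R : Type*} [Ring R] {p n : ℕ} (hp : p.Prime)
    (hR : (p : R) ^ n = 0) (s : ℕ) {a b : R} (hab : Commute a b) :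
    (a - b) ^ p ^ s ∣ a ^ p ^ (n + s - 1) - b ^ p ^ (n + s - 1) := by
  refine sub_pow_dvd_pow_sub_pow_of_choose_eq_zero hab fun k hk hks ↦ ?_
  have hval : k.factorization p < s :=
    (Nat.pow_lt_pow_iff_right hp.one_lt).1 ((Nat.ordProj_le p hk).trans_lt hks)
  have hdvd : p ^ n ∣ (p ^ (n + s - 1)).choose k :=
    prime_pow_dvd_choose_prime_pow hp hk (by lia)
  rw [← zero_dvd_iff, ← hR]
  exact_mod_cast Nat.cast_dvd_cast (α := R) hdvd

/-- For a prime `p` and `n ≥ 1`, in `(ℤ/p^n)[X]` the polynomial `(X - 1)^(p^s)` divides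
`X^(p^(n+s-1)) - 1`. -/
theorem sub_one_pow_dvd (p : ℕ) (hp : p.Prime) (n s : ℕ) (hn : 1 ≤ n) :
    (Polynomial.X - 1 : Polynomial (ZMod (p ^ n))) ^ (p ^ s) ∣
      Polynomial.X ^ (p ^ (n + s - 1)) - 1 := by
  have hchar : (p : Polynomial (ZMod (p ^ n))) ^ n = 0 := by
    exact_mod_cast CharP.cast_eq_zero (Polynomial (ZMod (p ^ n))) (p ^ n)
  simpa only [one_pow] using
    sub_one_pow_dvd_general hp hchar s (Commute.one_right Polynomial.X)
end

section
/- Let p be a prime, let d, N : ℕ with d < p^N, and let f : ℤ → ℤ be a polynomial map of degree ≤ d. Then for every x ∈ ℤ, p divides f(x + p^N) − f(x). In other words, the reduction mod p of any polynomial map ℤ → ℤ of degree < p^N is periodic with period p^N, i.e. factors through ℤ/p^N. -/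
/-!
The shift by `h` is `1 + Δ_h`, so in the endomorphism ring of `A → B` the Frobenius congruence
`(1 + Δ_h) ^ p ^ N ≡ 1 + Δ_h ^ p ^ N` modulo `p` compares the shift by `p ^ N • h` with the
identity. A polynomial map of degree less than `p ^ N` is killed by the `p ^ N`-th power of `Δ_h`.
-/

theorem exists_shift_prime_pow_eq_add_fwdDiff_iter {M G : Type*} [AddCommMonoid M]
    [AddCommGroup G] {p : ℕ} (hp : p.Prime) (N : ℕ) (h : M) (f : M → G) :
    ∃ g : M → G, ∀ x, f (x + p ^ N • h) = f x + (fwdDiff h)^[p ^ N] f x + p • g x := by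
  let D := fwdDiff_aux.fwdDiffₗ M G h
  obtain ⟨R, hR⟩ : ∃ R : Module.End ℤ (M → G), (D + 1) ^ p ^ N = 1 + D ^ p ^ N + p * R := by
    have frobenius := (Commute.one_right D).add_pow_prime_pow_eq' hp N
    rw [one_pow, add_comm (D ^ p ^ N)] at frobenius
    exact ⟨_, frobenius⟩
  refine ⟨R f, fun x => ?_⟩
  calc f (x + p ^ N • h) = ((D + 1) ^ p ^ N) f x := by
        rw [← fwdDiff_aux.shiftₗ_pow_apply h f, fwdDiff_aux.shiftₗ]
    _ = f x + (fwdDiff h)^[p ^ N] f x + p • R f x := by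
        simp [hR, D, ← fwdDiff_aux.coe_fwdDiffₗ_pow]

section PolynomialMap

variable {A B : Type*} [AddCommGroup A] [AddCommGroup B]

theorem DOp_eq_fwdDiff (a : A) (f : A → B) : DOp a f = fwdDiff a f := by
  funext x
  rw [DOp, fwdDiff, add_comm]

theorem IsPolyDeg.fwdDiff_iter_succ_eq_zero {d : ℕ} {f : A → B} (hf : IsPolyDeg d f) (a : A) :
    (fwdDiff a)^[d + 1] f = 0 := by
  induction d generalizing f with
  | zero => exact (DOp_eq_fwdDiff a f).symm.trans (funext (hf a))
  | succ d ih =>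
    rw [Function.iterate_succ_apply, ← DOp_eq_fwdDiff]
    exact ih (hf a)

theorem IsPolyDeg.fwdDiff_iter_eq_zero_of_lt {d n : ℕ} {f : A → B} (hf : IsPolyDeg d f)
    (hdn : d < n) (a : A) : (fwdDiff a)^[n] f = 0 := by
  obtain ⟨k, rfl⟩ := Nat.exists_eq_add_of_le' (Nat.succ_le_of_lt hdn)
  rw [Function.iterate_add_apply, hf.fwdDiff_iter_succ_eq_zero]
  exact Function.iterate_fixed (fwdDiff_const a 0) k

theorem polyMap_mod_p_periodic_general {p : ℕ} (hp : p.Prime) {d N : ℕ} (hd : d < p ^ N)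
    {f : A → B} (hf : IsPolyDeg d f) (a x : A) :
    ∃ b : B, f (x + p ^ N • a) - f x = p • b := by
  obtain ⟨g, hg⟩ := exists_shift_prime_pow_eq_add_fwdDiff_iter hp N a f
  refine ⟨g x, ?_⟩
  rw [hg, hf.fwdDiff_iter_eq_zero_of_lt hd, Pi.zero_apply, add_zero, add_sub_cancel_left]

end PolynomialMap

/-- If `f : ℤ → ℤ` is a polynomial map of degree `≤ d < p^N`, then `f` mod `p` is periodic
with period `p^N`: `p ∣ f (x + p^N) - f x` for all `x`. -/
theorem polyMap_mod_p_periodic (p : ℕ) (hp : p.Prime) (d N : ℕ) (hd : d < p ^ N)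
    (f : ℤ → ℤ) (hf : IsPolyDeg d f) :
    ∀ x : ℤ, (p : ℤ) ∣ f (x + (p : ℤ) ^ N) - f x := by
  intro x
  simpa [dvd_def] using polyMap_mod_p_periodic_general hp hd hf 1 x
end
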